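/- Let n be an integer, A ⊆ C([n],2), and a, v, b ∈ [n] with a ≠ b and {a,v}, {b,v} ∈ A. Let k₀ ≥ 1 be an integer and d a sequence of nonnegative integers of length n, and assume 0 < N_{av}(d − k(e_a + e_v)) < N(d − k(e_a + e_v)) for all 0 ≤ k ≤ k₀. Define Σ^{k₀} = Σ_{k=1}^{k₀} (−1)^{k−1} P_{bv}(d − k(e_a + e_v)) · Π_{j=1}^{k−1} [ P_{av}(d − j(e_a + e_v)) / (1 − P_{av}(d − (j+1)(e_a + e_v))) ] and T = [ P_{av}(d) / (1 − P_{av}(d − e_a − e_v)) ] · Σ^{k₀}. Then: if N_{{av,bv}}(d − k₀(e_a + e_v)) = 0 then P_{avb}(d) = T; otherwise P_{avb}(d) ≤ T when k₀ is odd, and P_{avb}(d) ≥ T when k₀ is even. -/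

import Mathlib

open Finset

noncomputable section

/-- Simple graphs on vertex set `[n]`, encoded as finsets of non-diagonal unordered pairs. -/
def Graphs (n : ℕ) : Finset (Finset (Sym2 (Fin n))) :=
  Finset.univ.filter (fun E => ∀ e ∈ E, ¬ e.IsDiag)

/-- Degree of vertex `i` in the graph `E`. -/
def deg {n : ℕ} (E : Finset (Sym2 (Fin n))) (i : Fin n) : ℕ :=
  (E.filter (fun e => i ∈ e)).card

/-- `N(D)`: the number of graphs realising the (integer) degree sequence `D` over the set `A`
of allowable pairs. -/
def NA (n : ℕ) (A : Finset (Sym2 (Fin n))) (D : Fin n → ℤ) : ℕ :=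
  ((Graphs n).filter (fun E => E ⊆ A ∧ ∀ i, (deg E i : ℤ) = D i)).card

/-- `N_F(D)`: the number of graphs realising `D` over `A` that contain all edges of `F`. -/
def NAE (n : ℕ) (A : Finset (Sym2 (Fin n))) (F : Finset (Sym2 (Fin n))) (D : Fin n → ℤ) : ℕ :=
  ((Graphs n).filter (fun E => E ⊆ A ∧ F ⊆ E ∧ ∀ i, (deg E i : ℤ) = D i)).card

/-- `P_F(D) = N_F(D)/N(D)`: the probability that a uniformly random graph realising `D`
over `A` contains all edges of `F`. -/
def PA (n : ℕ) (A : Finset (Sym2 (Fin n))) (F : Finset (Sym2 (Fin n))) (D : Fin n → ℤ) : ℝ :=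
  (NAE n A F D : ℝ) / (NA n A D : ℝ)

/-- The `a`-th standard unit vector. -/
def eV {n : ℕ} (a : Fin n) : Fin n → ℤ := fun i => if i = a then 1 else 0

/-- `A(v)`: the allowable neighbourhood of `v`. -/
def nbhd (n : ℕ) (A : Finset (Sym2 (Fin n))) (v : Fin n) : Finset (Fin n) :=
  Finset.univ.filter (fun u => s(v, u) ∈ A)

/-- `R_{ab}(D) = N(D - e_a)/N(D - e_b)`. -/
def RA (n : ℕ) (A : Finset (Sym2 (Fin n))) (a b : Fin n) (D : Fin n → ℤ) : ℝ :=
  (NA n A (D - eV a) : ℝ) / (NA n A (D - eV b) : ℝ)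

/-!
Deleting the edge `av` is a bijection from the graphs with degree sequence `D` that contain `av` to
the graphs with degree sequence `D - e_a - e_v` that avoid it. Counting only graphs that contain a
set `F` of other edges, this reads `N_{av,F}(D) + N_{av,F}(D - e_a - e_v) = N_F(D - e_a - e_v)`.
The case `F = ∅` identifies `r = P_{av}(D) / (1 - P_{av}(D - e_a - e_v))` with the ratio
`N(D - e_a - e_v) / N(D)`, so dividing the recurrence by `N(D)` gives
`P_{av,F}(D) = r * (P_F(D - e_a - e_v) - P_{av,F}(D - e_a - e_v))`. Iterating `k₀` times produces
the alternating sum, with a remainder of sign `(-1) ^ k₀`.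
-/

section Recurrence

variable {n : ℕ} {A E F : Finset (Sym2 (Fin n))} {D : Fin n → ℤ} {a v : Fin n}

lemma eV_add_eV_apply (hne : a ≠ v) (i : Fin n) :
    (eV a + eV v) i = if i ∈ s(a, v) then 1 else 0 := by
  simp only [Pi.add_apply, eV, Sym2.mem_iff]
  grind

lemma deg_insert {e : Sym2 (Fin n)} (he : e ∉ E) (i : Fin n) :
    deg (insert e E) i = deg E i + if i ∈ e then 1 else 0 := by
  unfold deg
  rw [filter_insert]
  split_ifs
  · rw [card_insert_of_notMem (fun h => he (mem_of_mem_filter e h))]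
  · rw [add_zero]

/-- The graphs over the allowable pairs `A` that realise the degree sequence `D` and contain all
edges of `F`; this is the set counted by `NAE`. -/
def realizations (A F : Finset (Sym2 (Fin n))) (D : Fin n → ℤ) : Finset (Finset (Sym2 (Fin n))) :=
  (Graphs n).filter (fun E => E ⊆ A ∧ F ⊆ E ∧ ∀ i, (deg E i : ℤ) = D i)

lemma card_realizations (A F : Finset (Sym2 (Fin n))) (D : Fin n → ℤ) :
    (realizations A F D).card = NAE n A F D := rfl

lemma mem_realizations : E ∈ realizations A F D ↔
    (∀ e ∈ E, ¬ e.IsDiag) ∧ E ⊆ A ∧ F ⊆ E ∧ ∀ i, (deg E i : ℤ) = D i := by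
  simp only [realizations, Graphs, mem_filter, mem_univ, true_and]

lemma filter_mem_realizations (A F : Finset (Sym2 (Fin n))) (D : Fin n → ℤ) (e : Sym2 (Fin n)) :
    (realizations A F D).filter (fun E => e ∈ E) = realizations A (insert e F) D := by
  ext E
  simp only [mem_filter, mem_realizations, insert_subset_iff]
  tauto

lemma insert_mem_realizations_iff (hne : a ≠ v) (hav : s(a, v) ∈ A) (hF : s(a, v) ∉ F)
    (hE : s(a, v) ∉ E) :
    insert s(a, v) E ∈ realizations A (insert s(a, v) F) D ↔
      E ∈ realizations A F (D - (eV a + eV v)) := by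
  have hdeg (i : Fin n) : (deg (insert s(a, v) E) i : ℤ) = D i ↔
      (deg E i : ℤ) = (D - (eV a + eV v)) i := by
    rw [Pi.sub_apply, eV_add_eV_apply hne, eq_sub_iff_add_eq, deg_insert hE]
    push_cast
    rfl
  simp only [mem_realizations, forall_mem_insert, insert_subset_iff (s := E),
    insert_subset_insert_iff hF, hdeg, Sym2.mk_isDiag_iff, hne, hav, not_false_eq_true, true_and]

lemma card_filter_notMem_realizations (hne : a ≠ v) (hav : s(a, v) ∈ A) (hF : s(a, v) ∉ F)
    (D : Fin n → ℤ) :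
    ((realizations A F (D - (eV a + eV v))).filter (fun E => s(a, v) ∉ E)).card =
      NAE n A (insert s(a, v) F) D := by
  rw [← card_realizations]
  have mem_of_mem {E : Finset (Sym2 (Fin n))}
      (hE : E ∈ realizations A (insert s(a, v) F) D) : s(a, v) ∈ E :=
    (mem_realizations.1 hE).2.2.1 (mem_insert_self _ _)
  refine card_nbij' (insert s(a, v)) (fun E => E.erase s(a, v))
    (fun E hE => ?_) (fun E hE => ?_) (fun E hE => ?_) (fun E hE => ?_)
  · obtain ⟨hE, hnot⟩ := mem_filter.1 hE
    exact (insert_mem_realizations_iff hne hav hF hnot).2 hE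
  · refine mem_filter.2 ⟨?_, notMem_erase _ _⟩
    rwa [← insert_mem_realizations_iff hne hav hF (notMem_erase _ _),
      insert_erase (mem_of_mem hE)]
  · exact erase_insert (mem_filter.1 hE).2
  · exact insert_erase (mem_of_mem hE)

theorem NAE_insert_add_NAE_insert (hne : a ≠ v) (hav : s(a, v) ∈ A) (hF : s(a, v) ∉ F)
    (D : Fin n → ℤ) :
    NAE n A (insert s(a, v) F) D + NAE n A (insert s(a, v) F) (D - (eV a + eV v)) =
      NAE n A F (D - (eV a + eV v)) := by
  rw [← card_filter_notMem_realizations hne hav hF, ← card_realizations A (insert _ _),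
    ← filter_mem_realizations, ← card_realizations A F, add_comm,
    card_filter_add_card_filter_not]

lemma NAE_empty (n : ℕ) (A : Finset (Sym2 (Fin n))) (D : Fin n → ℤ) :
    NAE n A ∅ D = NA n A D := by
  simp only [NAE, NA, empty_subset, true_and]

lemma NAE_singleton_add_NAE_singleton (hne : a ≠ v) (hav : s(a, v) ∈ A) (D : Fin n → ℤ) :
    NAE n A {s(a, v)} D + NAE n A {s(a, v)} (D - (eV a + eV v)) =
      NA n A (D - (eV a + eV v)) := by
  simpa only [NAE_empty, insert_empty_eq] using
    NAE_insert_add_NAE_insert hne hav (notMem_empty _) D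

lemma NAE_le_NA (n : ℕ) (A F : Finset (Sym2 (Fin n))) (D : Fin n → ℤ) :
    NAE n A F D ≤ NA n A D := by
  rw [← NAE_empty]
  refine card_le_card fun E hE => ?_
  rw [mem_filter] at hE ⊢
  exact ⟨hE.1, hE.2.1, empty_subset E, hE.2.2.2⟩

end Recurrence

section Probability

variable {n : ℕ} {A F : Finset (Sym2 (Fin n))} {D : Fin n → ℤ} {a v : Fin n}

lemma PA_nonneg (n : ℕ) (A F : Finset (Sym2 (Fin n))) (D : Fin n → ℤ) : 0 ≤ PA n A F D :=
  div_nonneg (Nat.cast_nonneg _) (Nat.cast_nonneg _)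

lemma PA_le_one (n : ℕ) (A F : Finset (Sym2 (Fin n))) (D : Fin n → ℤ) : PA n A F D ≤ 1 :=
  div_le_one_of_le₀ (Nat.cast_le.2 (NAE_le_NA n A F D)) (Nat.cast_nonneg _)

/-- The factor `P_{av}(D) / (1 - P_{av}(D - e_a - e_v))` of the expansion, which expresses the ratio
`N(D - e_a - e_v) / N(D)` through probabilities of the single edge `av`. -/
def edgeRatio (A : Finset (Sym2 (Fin n))) (a v : Fin n) (D : Fin n → ℤ) : ℝ :=
  PA n A {s(a, v)} D / (1 - PA n A {s(a, v)} (D - (eV a + eV v)))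

lemma edgeRatio_nonneg (A : Finset (Sym2 (Fin n))) (a v : Fin n) (D : Fin n → ℤ) :
    0 ≤ edgeRatio A a v D :=
  div_nonneg (PA_nonneg _ _ _ _) (sub_nonneg.2 (PA_le_one _ _ _ _))

lemma NA_sub_pos (hne : a ≠ v) (hav : s(a, v) ∈ A) (hpos : 0 < NAE n A {s(a, v)} D) :
    0 < NA n A (D - (eV a + eV v)) := by
  rw [← NAE_singleton_add_NAE_singleton hne hav]
  exact Nat.add_pos_left hpos _

lemma edgeRatio_eq_NA_div_NA (hne : a ≠ v) (hav : s(a, v) ∈ A)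
    (hpos : 0 < NAE n A {s(a, v)} D) :
    edgeRatio A a v D = NA n A (D - (eV a + eV v)) / NA n A D := by
  have hedge : (NAE n A {s(a, v)} D : ℝ) ≠ 0 := Nat.cast_ne_zero.2 hpos.ne'
  have hsub : (NA n A (D - (eV a + eV v)) : ℝ) ≠ 0 :=
    Nat.cast_ne_zero.2 (NA_sub_pos hne hav hpos).ne'
  have hcompl : 1 - PA n A {s(a, v)} (D - (eV a + eV v)) =
      NAE n A {s(a, v)} D / NA n A (D - (eV a + eV v)) := by
    rw [PA, one_sub_div hsub, ← NAE_singleton_add_NAE_singleton hne hav, Nat.cast_add,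
      add_sub_cancel_right]
  rw [edgeRatio, hcompl, PA, div_div_div_cancel_left' _ _ hedge]

theorem PA_insert_eq_edgeRatio_mul (hne : a ≠ v) (hav : s(a, v) ∈ A) (hF : s(a, v) ∉ F)
    (hpos : 0 < NAE n A {s(a, v)} D) :
    PA n A (insert s(a, v) F) D = edgeRatio A a v D *
      (PA n A F (D - (eV a + eV v)) - PA n A (insert s(a, v) F) (D - (eV a + eV v))) := by
  have hsub : (NA n A (D - (eV a + eV v)) : ℝ) ≠ 0 :=
    Nat.cast_ne_zero.2 (NA_sub_pos hne hav hpos).ne'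
  rw [edgeRatio_eq_NA_div_NA hne hav hpos, PA, PA, PA, ← sub_div,
    ← NAE_insert_add_NAE_insert hne hav hF, Nat.cast_add, add_sub_cancel_right, mul_comm,
    div_mul_div_cancel₀ hsub]

end Probability

section AlternatingExpansion

variable {R : Type*} [CommRing R] {c β r : ℕ → R} {m : ℕ}

lemma eq_alternating_sum_add_remainder
    (hrec : ∀ k < m, c k = r k * (β (k + 1) - c (k + 1))) :
    c 0 = r 0 * ∑ k ∈ Icc 1 m, (-1) ^ (k - 1) * β k * ∏ j ∈ Icc 1 (k - 1), r j +
      (-1) ^ m * ((∏ j ∈ range m, r j) * c m) := by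
  induction m with
  | zero => simp
  | succ m ih =>
    have hprod : ∏ j ∈ range (m + 1), r j = r 0 * ∏ j ∈ Icc 1 m, r j := by
      rw [prod_range_eq_mul_Ico r m.succ_pos]
      rfl
    rw [ih fun k hk => hrec k (hk.trans m.lt_succ_self), hrec m m.lt_succ_self,
      sum_Icc_succ_top (Nat.le_add_left 1 m), Nat.add_sub_cancel, mul_add (r 0),
      mul_left_comm (r 0), ← hprod, prod_range_succ]
    ring

variable [PartialOrder R] [IsOrderedRing R]

lemma le_alternating_sum_of_odd (hm : Odd m)
    (hrec : ∀ k < m, c k = r k * (β (k + 1) - c (k + 1))) (hr : ∀ k < m, 0 ≤ r k) (hc : 0 ≤ c m) :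
    c 0 ≤ r 0 * ∑ k ∈ Icc 1 m, (-1) ^ (k - 1) * β k * ∏ j ∈ Icc 1 (k - 1), r j := by
  rw [eq_alternating_sum_add_remainder hrec, hm.neg_one_pow, neg_one_mul]
  exact add_le_of_nonpos_right
    (neg_nonpos.2 (mul_nonneg (prod_nonneg fun j hj => hr j (mem_range.1 hj)) hc))

lemma alternating_sum_le_of_even (hm : Even m)
    (hrec : ∀ k < m, c k = r k * (β (k + 1) - c (k + 1))) (hr : ∀ k < m, 0 ≤ r k) (hc : 0 ≤ c m) :
    r 0 * ∑ k ∈ Icc 1 m, (-1) ^ (k - 1) * β k * ∏ j ∈ Icc 1 (k - 1), r j ≤ c 0 := by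
  rw [eq_alternating_sum_add_remainder hrec, hm.neg_one_pow, one_mul]
  exact le_add_of_nonneg_right (mul_nonneg (prod_nonneg fun j hj => hr j (mem_range.1 hj)) hc)

end AlternatingExpansion

theorem path_probability_expansion_general {n : ℕ} {A F : Finset (Sym2 (Fin n))} {a v : Fin n}
    (hne : a ≠ v) (hav : s(a, v) ∈ A) (hF : s(a, v) ∉ F) (k₀ : ℕ) (D : Fin n → ℤ)
    (hN : ∀ k : ℕ, k < k₀ → 0 < NAE n A {s(a, v)} (D - (k : ℤ) • (eV a + eV v))) :
    let Sk : ℝ := ∑ k ∈ Finset.Icc 1 k₀,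
      (-1 : ℝ) ^ (k - 1) * PA n A F (D - (k : ℤ) • (eV a + eV v)) *
        ∏ j ∈ Finset.Icc 1 (k - 1),
          PA n A {s(a, v)} (D - (j : ℤ) • (eV a + eV v)) /
            (1 - PA n A {s(a, v)} (D - ((j : ℤ) + 1) • (eV a + eV v)))
    let T : ℝ :=
      PA n A {s(a, v)} D / (1 - PA n A {s(a, v)} (D - eV a - eV v)) * Sk
    (NAE n A (insert s(a, v) F) (D - (k₀ : ℤ) • (eV a + eV v)) = 0 →
        PA n A (insert s(a, v) F) D = T) ∧
      (Odd k₀ → PA n A (insert s(a, v) F) D ≤ T) ∧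
        (Even k₀ → T ≤ PA n A (insert s(a, v) F) D) := by
  intro Sk T
  let shifted (k : ℕ) : Fin n → ℤ := D - (k : ℤ) • (eV a + eV v)
  have shifted_zero : shifted 0 = D := by simp [shifted]
  have shifted_sub (k : ℕ) : shifted k - (eV a + eV v) = D - ((k : ℤ) + 1) • (eV a + eV v) := by
    rw [add_smul, one_smul, ← sub_sub D]
  have shifted_succ (k : ℕ) : shifted (k + 1) = shifted k - (eV a + eV v) := by
    rw [shifted_sub, ← Nat.cast_succ]
  let ratio (k : ℕ) : ℝ := edgeRatio A a v (shifted k)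
  let prob (k : ℕ) : ℝ := PA n A F (shifted k)
  let probInsert (k : ℕ) : ℝ := PA n A (insert s(a, v) F) (shifted k)
  have hT : T = ratio 0 * ∑ k ∈ Icc 1 k₀,
      (-1) ^ (k - 1) * prob k * ∏ j ∈ Icc 1 (k - 1), ratio j := by
    simp only [T, Sk, ratio, edgeRatio, prob, shifted_sub, shifted, Nat.cast_zero, zero_smul,
      sub_zero, zero_add, one_smul, sub_sub]
  have hrec : ∀ k < k₀, probInsert k = ratio k * (prob (k + 1) - probInsert (k + 1)) := by
    intro k hk
    simpa only [probInsert, prob, shifted_succ] using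
      PA_insert_eq_edgeRatio_mul hne hav hF (hN k hk)
  have hratio : ∀ k < k₀, 0 ≤ ratio k := fun k _ => edgeRatio_nonneg A a v _
  have hlast : 0 ≤ probInsert k₀ := PA_nonneg _ _ _ _
  have hfirst : PA n A (insert s(a, v) F) D = probInsert 0 := by
    simp only [probInsert, shifted_zero]
  rw [hT, hfirst]
  refine ⟨fun hzero => ?_, fun hodd => le_alternating_sum_of_odd hodd hrec hratio hlast,
    fun heven => alternating_sum_le_of_even heven hrec hratio hlast⟩
  have hlast_zero : probInsert k₀ = 0 := by
    simp only [probInsert, shifted, PA, hzero, Nat.cast_zero, zero_div]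
  simpa only [hlast_zero, mul_zero, add_zero] using eq_alternating_sum_add_remainder hrec

/-- Alternating truncated expansion of the path probability `P_{avb}` (Lemma 3.2). -/
theorem path_probability_expansion (n : ℕ) (A : Finset (Sym2 (Fin n)))
    (hA : ∀ e ∈ A, ¬ e.IsDiag) (a v b : Fin n) (hab : a ≠ b)
    (hav : s(a, v) ∈ A) (hbv : s(b, v) ∈ A)
    (k₀ : ℕ) (hk₀ : 1 ≤ k₀) (D : Fin n → ℤ) (hD : ∀ i, 0 ≤ D i)
    (hN : ∀ k : ℕ, k ≤ k₀ →
      0 < NAE n A {s(a, v)} (D - (k : ℤ) • (eV a + eV v)) ∧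
        NAE n A {s(a, v)} (D - (k : ℤ) • (eV a + eV v)) <
          NA n A (D - (k : ℤ) • (eV a + eV v))) :
    let Sk : ℝ := ∑ k ∈ Finset.Icc 1 k₀,
      (-1 : ℝ) ^ (k - 1) * PA n A {s(b, v)} (D - (k : ℤ) • (eV a + eV v)) *
        ∏ j ∈ Finset.Icc 1 (k - 1),
          PA n A {s(a, v)} (D - (j : ℤ) • (eV a + eV v)) /
            (1 - PA n A {s(a, v)} (D - ((j : ℤ) + 1) • (eV a + eV v)))
    let T : ℝ :=
      PA n A {s(a, v)} D / (1 - PA n A {s(a, v)} (D - eV a - eV v)) * Sk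
    (NAE n A {s(a, v), s(b, v)} (D - (k₀ : ℤ) • (eV a + eV v)) = 0 →
        PA n A {s(a, v), s(b, v)} D = T) ∧
      (NAE n A {s(a, v), s(b, v)} (D - (k₀ : ℤ) • (eV a + eV v)) ≠ 0 →
        (Odd k₀ → PA n A {s(a, v), s(b, v)} D ≤ T) ∧
          (Even k₀ → T ≤ PA n A {s(a, v), s(b, v)} D)) := by
  have hne : a ≠ v := by simpa using hA _ hav
  have hF : s(a, v) ∉ ({s(b, v)} : Finset (Sym2 (Fin n))) := by simp [hab, hne]
  have h := path_probability_expansion_general hne hav hF k₀ D fun k hk => (hN k hk.le).1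
  exact ⟨h.1, fun _ => h.2⟩
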